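/- Let K be a field, (R, 𝔪) a parameter K-algebra, C a commutative K-algebra, (A, {−,−}, π) a Poisson R-deformation of C, s ∈ C, C' := C[s^{-1}] the localization of C at s, and τ : C → C' the localization homomorphism. Then there exist a Poisson R-deformation (A', {−,−}', π') of C' and an R-algebra homomorphism g : A → A' preserving the brackets (g({a,b}) = {g(a), g(b)}') with π' ∘ g = τ ∘ π, such that moreover the following universal property holds: for every commutative K-algebra C'', every ring homomorphism τ' : C' → C'', every Poisson R-deformation (A'', {−,−}'', π'') of C'', and every bracket-preserving R-algebra homomorphism h : A → A'' with π'' ∘ h = τ' ∘ τ ∘ π, there is a unique bracket-preserving R-algebra homomorphism g' : A' → A'' with h = g' ∘ g. -/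

import Mathlib

/-!
Choose a lift `t` of `s` in `A`. The deformation `A'` is the `𝔪`-adic completion of `B = A[t⁻¹]`.

* *Bracket.* A Poisson bracket is a biderivation, and derivations extend uniquely to localizations
  since Kähler differentials commute with localization. Antisymmetry and the Jacobi identity on `B`
  hold because both sides are derivations in each argument and agree on `A`. Being `R`-bilinear, the
  bracket of `B` respects congruence modulo `𝔪 ^ n`, and so extends to the completion.
* *Flatness.* `B` is flat over `R`, but neither `B` nor its completion need be noetherian, so the
  usual flatness of completions does not apply. Instead `flat_of_dense` verifies the equational
  criterion: since `R` is noetherian, the syzygies of the coefficients of a relation are finitely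
  generated, and Artin–Rees in `R` gives a uniform rate for solving the relation modulo powers of
  `𝔪`; successive approximation then trivializes the relation in the completion.
* *Fibre.* `𝔪 ^ n` times the completion is the kernel of the projection to `B / 𝔪 ^ n B`, because `𝔪`
  is finitely generated. For `n = 1` this is `A / 𝔪 A = C` localized at `s`.
* *Universal property.* If `h : A → A''` lifts `τ' ∘ τ`, then `h t` is a unit modulo `𝔪 A''`, which
  lies in the Jacobson radical of the complete algebra `A''`; so `h t` is a unit, `h` extends to `B`,
  and by completeness of `A''` to `A'`. Compatibility with brackets and uniqueness hold on `A`, hence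
  on `B`, hence on `A'` since `B` is dense in `A'` and `A''` is separated.
-/

/-- A Poisson `R`-deformation of the commutative `K`-algebra `C`: a commutative `R`-algebra that
is flat and `𝔪`-adically complete as an `R`-module, equipped with an `R`-bilinear bracket which
is antisymmetric, satisfies the Jacobi identity and is a derivation in each argument, together
with a surjective augmentation to `C` (an `R`-algebra homomorphism, where `R` acts on `C`
through `R/𝔪 = K`) whose kernel is `𝔪A` and which kills the bracket. -/
structure PoissonDeformation (K R C : Type) [Field K] [CommRing R] [Algebra K R]
    [IsLocalRing R] [CommRing C] [Algebra K C] : Type 1 where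
  carrier : Type
  [ring : CommRing carrier]
  [algK : Algebra K carrier]
  [algR : Algebra R carrier]
  [tower : IsScalarTower K R carrier]
  flat : Module.Flat R carrier
  complete : IsAdicComplete (IsLocalRing.maximalIdeal R) carrier
  bracket : carrier → carrier → carrier
  bracket_add_left : ∀ a b c, bracket (a + b) c = bracket a c + bracket b c
  bracket_add_right : ∀ a b c, bracket a (b + c) = bracket a b + bracket a c
  bracket_smul_left : ∀ (r : R) (a b), bracket (r • a) b = r • bracket a b
  bracket_smul_right : ∀ (r : R) (a b), bracket a (r • b) = r • bracket a b
  bracket_antisymm : ∀ a b, bracket a b = - bracket b a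
  bracket_jacobi : ∀ a b c,
    bracket a (bracket b c) + bracket b (bracket c a) + bracket c (bracket a b) = 0
  bracket_leibniz_left : ∀ a b c, bracket (a * b) c = bracket a c * b + a * bracket b c
  bracket_leibniz_right : ∀ a b c, bracket a (b * c) = bracket a b * c + b * bracket a c
  aug : carrier →ₐ[K] C
  surj : Function.Surjective aug
  ker : ∀ a : carrier, aug a = 0 ↔
    a ∈ (IsLocalRing.maximalIdeal R • ⊤ : Submodule R carrier)
  aug_bracket : ∀ a b, aug (bracket a b) = 0

attribute [instance] PoissonDeformation.ring PoissonDeformation.algK PoissonDeformation.algR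
  PoissonDeformation.tower

/-! ### Flatness of a completion over a noetherian ring -/

theorem mem_smul_top_pi {R : Type*} [CommRing R] {l : ℕ} (I : Ideal R) (v : Fin l → R) :
    v ∈ (I • ⊤ : Submodule R (Fin l → R)) ↔ ∀ i, v i ∈ I := by
  constructor
  · intro h i
    have := Submodule.smul_top_le_comap_smul_top I (LinearMap.proj (R := R) (φ := fun _ => R) i) h
    simpa using this
  · intro h
    rw [pi_eq_sum_univ' v]
    exact Submodule.sum_mem _ fun i _ => Submodule.smul_mem_smul (h i) trivial

/-- Approximate solutions of one linear equation are close to exact ones. The `ρ j` generate the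
syzygies of `f`. If `v` has entries in `I ^ n` and `∑ f i * v i` lies in a large power of `I`, then
modulo `I ^ (n + 1)` the vector `v` is a combination of the `ρ j` with coefficients in
`I ^ (n - c)`, where `c` does not depend on `n` or `v`. This is Artin–Rees, used once for the image
of `v ↦ ∑ f i * v i` and once for its kernel. -/
theorem exists_artinRees_syzygy {R : Type*} [CommRing R] [IsNoetherianRing R] (I : Ideal R)
    {l : ℕ} (f : Fin l → R) :
    ∃ (k : ℕ) (ρ : Fin k → Fin l → R) (c : ℕ), (∀ j, ∑ i, f i * ρ j i = 0) ∧
      ∀ n, ∃ N, n + 1 ≤ N ∧ ∀ v : Fin l → R, (∀ i, v i ∈ I ^ n) → ∑ i, f i * v i ∈ I ^ N →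
        ∃ w : Fin k → R, (∀ j, w j ∈ I ^ (n - c)) ∧
          ∀ i, v i - ∑ j, w j * ρ j i ∈ I ^ (n + 1) := by
  classical
  let φ : (Fin l → R) →ₗ[R] R := Fintype.linearCombination R f
  have hφ : ∀ v, φ v = ∑ i, f i * v i := fun v => by
    simp [φ, Fintype.linearCombination_apply, mul_comm]
  obtain ⟨c₁, h₁⟩ := I.exists_pow_inf_eq_pow_smul (LinearMap.range φ)
  obtain ⟨c₂, h₂⟩ := I.exists_pow_inf_eq_pow_smul (LinearMap.ker φ)
  obtain ⟨k, ρ, hρ⟩ := Submodule.fg_iff_exists_fin_generating_family.mp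
    (IsNoetherian.noetherian (LinearMap.ker φ))
  refine ⟨k, ρ, c₂, fun j => ?_, fun n => ⟨n + 1 + c₁, by omega, fun v hv hfv => ?_⟩⟩
  · rw [← hφ]
    have : ρ j ∈ LinearMap.ker φ := hρ ▸ Submodule.subset_span ⟨j, rfl⟩
    simpa using this
  · rw [← hφ] at hfv
    have h3 : φ v ∈ I ^ (n + 1) • LinearMap.range φ := by
      have : φ v ∈ (I ^ (n + 1 + c₁) • ⊤ ⊓ LinearMap.range φ : Submodule R R) :=
        ⟨by simpa using hfv, ⟨v, rfl⟩⟩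
      rw [h₁ _ (by omega), Nat.add_sub_cancel] at this
      exact Submodule.smul_mono le_rfl inf_le_right this
    rw [LinearMap.range_eq_map, ← Submodule.map_smul''] at h3
    obtain ⟨e, he, hev⟩ := h3
    have h4 : v - e ∈ (I ^ (n - c₂) • LinearMap.ker φ : Submodule R (Fin l → R)) := by
      have hk : v - e ∈ LinearMap.ker φ := by simp [hev]
      by_cases hn : c₂ ≤ n
      · have : v - e ∈ (I ^ n • ⊤ ⊓ LinearMap.ker φ : Submodule R (Fin l → R)) :=
          ⟨Submodule.sub_mem _ ((mem_smul_top_pi _ _).2 hv)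
            (Submodule.smul_mono_left (Ideal.pow_le_pow_right (Nat.le_succ n)) he), hk⟩
        rw [h₂ _ hn] at this
        exact Submodule.smul_mono le_rfl inf_le_right this
      · rw [Nat.sub_eq_zero_of_le (by omega), pow_zero]
        simpa using hk
    rw [← hρ, Submodule.mem_ideal_smul_span_iff_exists_sum] at h4
    obtain ⟨w, hw, hsum⟩ := h4
    refine ⟨w, hw, fun i => ?_⟩
    have h5 := congrFun hsum i
    rw [Finsupp.sum_fintype _ _ (by simp)] at h5
    simp only [Finset.sum_apply, Pi.smul_apply, smul_eq_mul, Pi.sub_apply] at h5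
    rw [h5, sub_sub_cancel]
    exact (mem_smul_top_pi _ _).1 he i

/-- A finite set of generators of `J` expresses every element of `J • P`. -/
theorem exists_generators_smul_top {R : Type*} [CommRing R] [IsNoetherianRing R] (J : Ideal R)
    (P : Type*) [AddCommGroup P] [Module R P] :
    ∃ (s : ℕ) (g : Fin s → R), (∀ a, g a ∈ J) ∧
      ∀ b ∈ (J • ⊤ : Submodule R P), ∃ t : Fin s → P, b = ∑ a, g a • t a := by
  obtain ⟨s, g, hg⟩ := Submodule.fg_iff_exists_fin_generating_family.mp
    (IsNoetherian.noetherian J)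
  refine ⟨s, g, fun a => hg ▸ Submodule.subset_span ⟨a, rfl⟩, fun b hb => ?_⟩
  refine Submodule.smul_induction_on hb (fun r hr p _ => ?_) ?_
  · rw [← hg] at hr
    obtain ⟨c, rfl⟩ := (Submodule.mem_span_range_iff_exists_fun R).1 hr
    refine ⟨fun a => c a • p, ?_⟩
    rw [Finset.sum_smul]
    exact Finset.sum_congr rfl fun a _ => by rw [smul_eq_mul, mul_smul, smul_comm]
  · rintro _ _ ⟨t, rfl⟩ ⟨t', rfl⟩
    exact ⟨t + t', by simp [Finset.sum_add_distrib]⟩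

/-- One step of the successive approximation behind `flat_of_dense`. A relation
`∑ f i • x i = 0` in `M` with all `x i` in `I ^ n • M` is reduced, by density, to an approximate
relation in the flat module `B`; flatness of `B` turns it into approximate relations in `R`, to
which the hypothesis `H`, in the form given by `exists_artinRees_syzygy`, applies. The outcome is
that the `x i` are combinations of the syzygies `ρ j` up to an error in `I ^ (n + 1) • M`. -/
theorem trivialize_step {R B M : Type*} [CommRing R] [IsNoetherianRing R] (I : Ideal R)
    [AddCommGroup B] [Module R B] [Module.Flat R B] [AddCommGroup M] [Module R M]
    (ι : B →ₗ[R] M)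
    (hd : ∀ (n : ℕ) (x : M), ∃ b, x - ι b ∈ (I ^ n • ⊤ : Submodule R M))
    (hs : ∀ (n : ℕ) (b : B), ι b ∈ (I ^ n • ⊤ : Submodule R M) →
      b ∈ (I ^ n • ⊤ : Submodule R B))
    {l k : ℕ} (f : Fin l → R) (ρ : Fin k → Fin l → R) (c n N : ℕ) (hnN : n + 1 ≤ N)
    (H : ∀ v : Fin l → R, (∀ i, v i ∈ I ^ n) → ∑ i, f i * v i ∈ I ^ N →
        ∃ w : Fin k → R, (∀ j, w j ∈ I ^ (n - c)) ∧
          ∀ i, v i - ∑ j, w j * ρ j i ∈ I ^ (n + 1))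
    (x : Fin l → M) (hx : ∀ i, x i ∈ (I ^ n • ⊤ : Submodule R M))
    (hfx : ∑ i, f i • x i = 0) :
    ∃ y : Fin k → M, (∀ j, y j ∈ (I ^ (n - c) • ⊤ : Submodule R M)) ∧
      ∀ i, x i - ∑ j, ρ j i • y j ∈ (I ^ (n + 1) • ⊤ : Submodule R M) := by
  classical
  have mono : ∀ {p q : ℕ}, p ≤ q → (I ^ q • ⊤ : Submodule R M) ≤ I ^ p • ⊤ := fun h =>
    Submodule.smul_mono_left (Ideal.pow_le_pow_right h)
  choose b hb using fun i => hd N (x i)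
  have hbn : ∀ i, b i ∈ (I ^ n • ⊤ : Submodule R B) := fun i => hs _ _ <| by
    have := Submodule.sub_mem _ (hx i) (mono (by omega : n ≤ N) (hb i))
    simpa using this
  have hfb : ∑ i, f i • b i ∈ (I ^ N • ⊤ : Submodule R B) := hs _ _ <| by
    have h1 : ι (∑ i, f i • b i) = - ∑ i, f i • (x i - ι (b i)) := by
      simp [smul_sub, hfx]
    rw [h1]
    exact Submodule.neg_mem _ (Submodule.sum_mem _ fun i _ => Submodule.smul_mem _ _ (hb i))
  obtain ⟨s, g, hg, hgB⟩ := exists_generators_smul_top (I ^ n) B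
  obtain ⟨s', q, hq, hqB⟩ := exists_generators_smul_top (I ^ N) B
  choose t ht using fun i => hgB _ (hbn i)
  obtain ⟨u, hu⟩ := hqB _ hfb
  let F : (Fin l × Fin s) ⊕ Fin s' → R := Sum.elim (fun p => f p.1 * g p.2) (fun j => - q j)
  let X : (Fin l × Fin s) ⊕ Fin s' → B := Sum.elim (fun p => t p.1 p.2) u
  have hFX : ∑ i, F i • X i = 0 := by
    simp only [F, X, Fintype.sum_sum_type, Sum.elim_inl, Sum.elim_inr, Fintype.sum_prod_type,
      neg_smul, Finset.sum_neg_distrib, ← hu, mul_smul, ← Finset.smul_sum, ← ht]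
    simp
  -- The coefficients of `F` express `∑ f i • b i` through generators of `I ^ n` and `I ^ N`, so that
  -- the equational criterion keeps track of membership in these powers.
  obtain ⟨κ, α, z, hz, hα⟩ := Module.Flat.isTrivialRelation_of_sum_smul_eq_zero hFX
  have hv := fun e : Fin κ => H (fun i => ∑ a, g a * α (Sum.inl (i, a)) e)
    (fun i => Ideal.sum_mem _ fun a _ => Ideal.mul_mem_right _ _ (hg a)) (by
      have h1 := hα e
      simp only [F, Fintype.sum_sum_type, Sum.elim_inl, Sum.elim_inr, Fintype.sum_prod_type,
        neg_mul, Finset.sum_neg_distrib, ← sub_eq_add_neg, sub_eq_zero, mul_assoc,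
        ← Finset.mul_sum] at h1
      rw [h1]
      exact Ideal.sum_mem _ fun a _ => Ideal.mul_mem_right _ _ (hq a))
  choose w hw hw' using hv
  refine ⟨fun j => ∑ e, w e j • ι (z e), fun j => Submodule.sum_mem _ fun e _ =>
    Submodule.smul_mem_smul (hw e j) trivial, fun i => ?_⟩
  have hbi : b i = ∑ e, (∑ a, g a * α (Sum.inl (i, a)) e) • z e := by
    rw [ht i]
    have h1 : ∀ a, t i a = ∑ e, α (Sum.inl (i, a)) e • z e := fun a => hz (Sum.inl (i, a))
    simp only [h1, Finset.smul_sum, Finset.sum_smul, mul_smul]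
    rw [Finset.sum_comm]
  have key : x i - ∑ j, ρ j i • ∑ e, w e j • ι (z e) = (x i - ι (b i)) +
      ∑ e, ((∑ a, g a * α (Sum.inl (i, a)) e) - ∑ j, w e j * ρ j i) • ι (z e) := by
    have h2 : ∑ j, ρ j i • ∑ e, w e j • ι (z e) = ∑ e, (∑ j, w e j * ρ j i) • ι (z e) := by
      simp only [Finset.smul_sum, Finset.sum_smul, smul_smul]
      rw [Finset.sum_comm]
      simp only [mul_comm]
    rw [h2, hbi]
    simp only [sub_smul, Finset.sum_sub_distrib, map_sum, map_smul]
    abel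
  rw [key]
  exact Submodule.add_mem _ (mono hnN (hb i)) (Submodule.sum_mem _ fun e _ =>
    Submodule.smul_mem_smul (hw' e i) trivial)

theorem exists_sum_limit {R M : Type*} [CommRing R] (I : Ideal R) [AddCommGroup M] [Module R M]
    [IsAdicComplete I M] (c : ℕ) (y : ℕ → M)
    (hy : ∀ n, y n ∈ (I ^ (n - c) • ⊤ : Submodule R M)) :
    ∃ Y : M, ∀ n, ∑ m ∈ Finset.range (n + c), y m - Y ∈ (I ^ n • ⊤ : Submodule R M) := by
  obtain ⟨Y, hY⟩ := IsPrecomplete.prec' (I := I) (M := M)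
    (fun n => ∑ m ∈ Finset.range (n + c), y m) (fun {m n} hmn => by
      rw [SModEq.comm, SModEq.sub_mem, ← Finset.sum_range_add_sum_Ico y (by omega : m + c ≤ n + c),
        add_sub_cancel_left]
      refine Submodule.sum_mem _ fun i hi => ?_
      rw [Finset.mem_Ico] at hi
      exact Submodule.smul_mono_left (Ideal.pow_le_pow_right (by omega : m ≤ i - c)) (hy i))
  exact ⟨Y, fun n => SModEq.sub_mem.1 (hY n)⟩

/-- Let `R` be noetherian, `M` an `I`-adically complete module and `ι : B → M` a map with dense
image from a flat module which is strict for the `I`-adic filtrations. Then `M` is flat: iterating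
`trivialize_step` trivializes any relation in `M`, since the syzygies of its coefficients are
finitely generated and the corrections converge. Neither `M` nor `B` is assumed noetherian. -/
theorem flat_of_dense {R B M : Type*} [CommRing R] [IsNoetherianRing R] (I : Ideal R)
    [AddCommGroup B] [Module R B] [Module.Flat R B] [AddCommGroup M] [Module R M]
    [IsAdicComplete I M] (ι : B →ₗ[R] M)
    (hd : ∀ (n : ℕ) (x : M), ∃ b, x - ι b ∈ (I ^ n • ⊤ : Submodule R M))
    (hs : ∀ (n : ℕ) (b : B), ι b ∈ (I ^ n • ⊤ : Submodule R M) →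
      b ∈ (I ^ n • ⊤ : Submodule R B)) :
    Module.Flat R M := by
  refine Module.Flat.of_forall_isTrivialRelation fun {l f x} hfx => ?_
  obtain ⟨k, ρ, c, hρ, H⟩ := exists_artinRees_syzygy I f
  choose N hN H using H
  have ψ0 : ∀ y : Fin k → M, ∑ i, f i • ∑ j, ρ j i • y j = 0 := fun y => by
    simp only [Finset.smul_sum, smul_smul]
    rw [Finset.sum_comm]
    simp only [← Finset.sum_smul, hρ, zero_smul, Finset.sum_const_zero]
  choose! Y hY hY' using fun (n : ℕ) (x : Fin l → M)
    (h : (∀ i, x i ∈ (I ^ n • ⊤ : Submodule R M)) ∧ ∑ i, f i • x i = 0) =>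
    trivialize_step I ι hd hs f ρ c n (N n) (hN n) (H n) x h.1 h.2
  -- `z n` is the remainder after `n` corrections; it lies in `I ^ n • M` and still satisfies `f`.
  let z : ℕ → Fin l → M := fun n => Nat.rec x (fun n z i => z i - ∑ j, ρ j i • Y n z j) n
  have hz1 : ∀ n i, z (n + 1) i = z n i - ∑ j, ρ j i • Y n (z n) j := fun _ _ => rfl
  have hz : ∀ n, (∀ i, z n i ∈ (I ^ n • ⊤ : Submodule R M)) ∧ ∑ i, f i • z n i = 0 := by
    intro n
    induction n with
    | zero => exact ⟨fun i => by simp, hfx⟩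
    | succ n ih =>
      refine ⟨fun i => hY' n _ ih i, ?_⟩
      simp only [hz1, smul_sub, Finset.sum_sub_distrib, ih.2, ψ0, sub_zero]
  have hzx : ∀ n i, x i = z n i + ∑ j, ρ j i • ∑ m ∈ Finset.range n, Y m (z m) j := by
    intro n i
    induction n with
    | zero => simp [z]
    | succ n ih =>
      rw [ih, hz1]
      simp only [Finset.sum_range_succ, smul_add, Finset.sum_add_distrib]
      abel
  choose y hy using fun j => exists_sum_limit I c (fun n => Y n (z n) j)
    (fun n => hY n _ (hz n) j)
  refine ⟨k, fun i j => ρ j i, y, fun i => ?_, hρ⟩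
  rw [← sub_eq_zero]
  refine IsHausdorff.haus (I := I) inferInstance _ fun n => ?_
  rw [SModEq.zero]
  have : x i - ∑ j, ρ j i • y j = z (n + c) i +
      ∑ j, ρ j i • (∑ m ∈ Finset.range (n + c), Y m (z m) j - y j) := by
    conv_lhs => rw [hzx (n + c) i]
    simp only [smul_sub, Finset.sum_sub_distrib]
    abel
  rw [this]
  exact Submodule.add_mem _
    (Submodule.smul_mono_left (Ideal.pow_le_pow_right (by omega)) ((hz (n + c)).1 i))
    (Submodule.sum_mem _ fun j _ => Submodule.smul_mem _ _ (hy j n))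

/-! ### Extension of the bracket to a localization -/

/-- A map satisfying the Leibniz rule along `φ` is determined on a localization by its restriction
to the original ring; no additivity is needed. -/
theorem eq_zero_of_leibniz {A B N : Type*} [CommRing A] [CommRing B] [CommRing N] [Algebra A B]
    (S : Submonoid A) [IsLocalization S B] (φ : B →+* N) (f : B → N)
    (hmul : ∀ x y, f (x * y) = f x * φ y + φ x * f y)
    (h0 : ∀ a, f (algebraMap A B a) = 0) (x : B) : f x = 0 := by
  obtain ⟨⟨a, s⟩, h⟩ := IsLocalization.surj S x
  have h1 := hmul x (algebraMap A B s)
  rw [h, h0, h0, mul_zero, add_zero] at h1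
  have hu : IsUnit (φ (algebraMap A B s)) := (IsLocalization.map_units B s).map φ
  exact (hu.mul_left_eq_zero).1 h1.symm

/-- Derivations extend along a localization, because `Ω[B⁄R]` is the localization of `Ω[A⁄R]`. -/
theorem exists_derivation_extension {R A B N : Type*} [CommRing R] [CommRing A] [CommRing B]
    [Algebra R A] [Algebra R B] [Algebra A B] [IsScalarTower R A B] (S : Submonoid A)
    [IsLocalization S B] [AddCommGroup N] [Module R N] [Module A N] [Module B N]
    [IsScalarTower R A N] [IsScalarTower A B N] [IsScalarTower R B N] (d : Derivation R A N) :
    ∃ d' : Derivation R B N, ∀ a, d' (algebraMap A B a) = d a := by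
  let ψ := KaehlerDifferential.map R R A B
  have hN : ∀ s : S, IsUnit ((algebraMap A (Module.End A N)) s) := fun s => by
    have := (IsLocalization.map_units B s)
    rw [Module.End.isUnit_iff]
    have h2 : ∀ n : N, (algebraMap A (Module.End A N) s) n = algebraMap A B s • n := fun n => by
      simp
    have h3 : ⇑(algebraMap A (Module.End A N) s) = fun n => algebraMap A B s • n := funext h2
    rw [h3]
    exact (MulAction.bijective this.unit)
  let L : Ω[B⁄R] →ₗ[A] N := IsLocalizedModule.lift S ψ d.liftKaehlerDifferential hN
  let L' : Ω[B⁄R] →ₗ[B] N := L.extendScalarsOfIsLocalization S B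
  refine ⟨L'.compDer (KaehlerDifferential.D R B), fun a => ?_⟩
  have : L (ψ (KaehlerDifferential.D R A a)) = d a := by
    rw [IsLocalizedModule.lift_apply]; simp
  simpa [ψ, L'] using this

/-- A biderivation of `A` extends to the localization `B`. It is encoded as a derivation of `B` with
values in the `B`-module of derivations of `B`: first each `β a` is extended, then `a ↦ β a`. -/
theorem exists_localized_bracket {R A B : Type*} [CommRing R] [CommRing A] [CommRing B]
    [Algebra R A] [Algebra R B] [Algebra A B] [IsScalarTower R A B] (S : Submonoid A)
    [IsLocalization S B] (β : A → A → A)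
    (hal : ∀ a b c, β (a + b) c = β a c + β b c) (har : ∀ a b c, β a (b + c) = β a b + β a c)
    (hsl : ∀ (r : R) a b, β (r • a) b = r • β a b) (hsr : ∀ (r : R) a b, β a (r • b) = r • β a b)
    (hll : ∀ a b c, β (a * b) c = β a c * b + a * β b c)
    (hlr : ∀ a b c, β a (b * c) = β a b * c + b * β a c) :
    ∃ D : Derivation R B (Derivation R B B),
      ∀ a b, D (algebraMap A B a) (algebraMap A B b) = algebraMap A B (β a b) := by
  let ham : A → Derivation R A B := fun a =>
    Derivation.mk' ((Algebra.linearMap A B).restrictScalars R ∘ₗ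
      { toFun := β a, map_add' := har a, map_smul' := fun r b => hsr r a b })
      (fun b c => by
        simp [hlr, Algebra.smul_def, mul_comm, add_comm])
  choose E hE using fun a => exists_derivation_extension (B := B) S (ham a)
  have hE' : ∀ a b, E a (algebraMap A B b) = algebraMap A B (β a b) := hE
  have ext : ∀ d₁ d₂ : Derivation R B B, (∀ a, d₁ (algebraMap A B a) = d₂ (algebraMap A B a)) →
      d₁ = d₂ := fun d₁ d₂ h => by
    rw [← sub_eq_zero]
    refine Derivation.ext fun x => eq_zero_of_leibniz S (RingHom.id B) (d₁ - d₂) (fun x y => ?_)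
      (fun a => ?_) x
    · simp only [Pi.sub_apply, Derivation.leibniz, smul_eq_mul, RingHom.id_apply]
      ring
    · simp [h]
  let E' : Derivation R A (Derivation R B B) := Derivation.mk'
    { toFun := E
      map_add' := fun a b => ext _ _ fun c => by simp [hE', hal]
      map_smul' := fun r a => ext _ _ fun c => by
        rw [Derivation.smul_apply, hE', hE', hsl, RingHom.id_apply, Algebra.smul_def,
          Algebra.smul_def, map_mul, ← IsScalarTower.algebraMap_apply] }
    (fun a b => ext _ _ fun c => by
      simp [hE', hll, Algebra.smul_def, mul_comm, add_comm])
  obtain ⟨D, hD⟩ := exists_derivation_extension (B := B) S E'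
  exact ⟨D, fun a b => by rw [hD]; exact hE' a b⟩

theorem eq_zero_of_bileibniz {A B N : Type*} [CommRing A] [CommRing B] [CommRing N] [Algebra A B]
    (S : Submonoid A) [IsLocalization S B] (φ : B →+* N) (f : B → B → N)
    (hl : ∀ x y z, f (x * y) z = f x z * φ y + φ x * f y z)
    (hr : ∀ x y z, f x (y * z) = f x y * φ z + φ y * f x z)
    (h0 : ∀ a b, f (algebraMap A B a) (algebraMap A B b) = 0) (x y : B) : f x y = 0 :=
  eq_zero_of_leibniz S φ (fun x => f x y) (fun x x' => hl x x' y)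
    (fun a => eq_zero_of_leibniz S φ (f (algebraMap A B a)) (fun y y' => hr _ y y') (h0 a) y) x

theorem localized_antisymm {R A B : Type*} [CommRing R] [CommRing A] [CommRing B]
    [Algebra R B] [Algebra A B] (S : Submonoid A) [IsLocalization S B]
    (D : Derivation R B (Derivation R B B))
    (h : ∀ a b, D (algebraMap A B a) (algebraMap A B b) =
      - D (algebraMap A B b) (algebraMap A B a)) (x y : B) : D x y = - D y x := by
  rw [← sub_eq_zero]
  refine eq_zero_of_bileibniz S (RingHom.id B) (fun x y => D x y - - D y x)
    (fun x y z => ?_) (fun x y z => ?_) (fun a b => by simp [h a b]) x y <;>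
  · simp only [Derivation.leibniz, Derivation.add_apply, Derivation.smul_apply, smul_eq_mul,
      RingHom.id_apply]
    ring

/-- The Jacobiator of an antisymmetric biderivation is a derivation in its last argument and is
cyclically invariant, so it vanishes on `B` as soon as it vanishes on `A`. -/
theorem localized_jacobi {R A B : Type*} [CommRing R] [CommRing A] [CommRing B]
    [Algebra R B] [Algebra A B] (S : Submonoid A) [IsLocalization S B]
    (D : Derivation R B (Derivation R B B)) (hD : ∀ x y, D x y = - D y x)
    (h : ∀ a b c, D (algebraMap A B a) (D (algebraMap A B b) (algebraMap A B c)) +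
      D (algebraMap A B b) (D (algebraMap A B c) (algebraMap A B a)) +
      D (algebraMap A B c) (D (algebraMap A B a) (algebraMap A B b)) = 0) (x y z : B) :
    D x (D y z) + D y (D z x) + D z (D x y) = 0 := by
  let F : B → B → B → B := fun x y z => D x (D y z) + D y (D z x) + D z (D x y)
  have cyc : ∀ x y z, F x y z = F y z x := fun x y z => by simp only [F]; ring
  have hF : ∀ x y z w, F x y (z * w) = F x y z * w + z * F x y w := fun x y z w => by
    -- By antisymmetry `F x y` is `[D x, D y] - D (D x y)`, visibly a derivation.
    have h1 : ∀ z, F x y z = D x (D y z) - D y (D x z) - D (D x y) z := fun z => by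
      simp only [F]
      rw [hD z x, hD z (D x y), map_neg]
      ring
    simp only [h1, Derivation.leibniz, map_add, smul_eq_mul]
    ring
  have last : ∀ x y, (∀ c, F x y (algebraMap A B c) = 0) → ∀ z, F x y z = 0 := fun x y h0 z =>
    eq_zero_of_leibniz S (RingHom.id B) (F x y) (hF x y) h0 z
  refine last x y (fun c => ?_) z
  rw [← cyc]
  refine last _ x (fun b => ?_) y
  rw [← cyc]
  exact last _ _ (fun a => h _ _ _) x

/-! ### Adic completions -/

theorem sub_mem_of_bilinear {R T : Type*} [CommRing R] [AddCommGroup T] [Module R T] (I : Ideal R)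
    (β : T →ₗ[R] T →ₗ[R] T) {a a' b b' : T} (ha : a - a' ∈ (I • ⊤ : Submodule R T))
    (hb : b - b' ∈ (I • ⊤ : Submodule R T)) : β a b - β a' b' ∈ (I • ⊤ : Submodule R T) := by
  have h1 := Submodule.smul_top_le_comap_smul_top I (β.flip b) ha
  have h2 := Submodule.smul_top_le_comap_smul_top I (β a') hb
  rw [Submodule.mem_comap] at h1 h2
  have := Submodule.add_mem _ h1 h2
  simpa using this

/-- An `R`-bilinear operation on `B` extends to the completion: it preserves congruence modulo
`I ^ n • B` in each argument, hence can be computed level by level on representatives. -/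
theorem exists_completed_bracket {R B : Type*} [CommRing R] [CommRing B] [Algebra R B]
    (I : Ideal R) (β : B →ₗ[R] B →ₗ[R] B) :
    ∃ γ : AdicCompletion (I.map (algebraMap R B)) B → AdicCompletion (I.map (algebraMap R B)) B →
        AdicCompletion (I.map (algebraMap R B)) B, ∀ n x y a b,
      AdicCompletion.evalₐ _ n x = Ideal.Quotient.mk _ a →
      AdicCompletion.evalₐ _ n y = Ideal.Quotient.mk _ b →
      AdicCompletion.evalₐ _ n (γ x y) = Ideal.Quotient.mk _ (β a b) := by
  have hJ : ∀ n (b : B), b ∈ I.map (algebraMap R B) ^ n ↔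
      b ∈ (I ^ n • ⊤ : Submodule R B) := fun n b => by
    rw [← Ideal.map_pow, Ideal.smul_top_eq_map, Submodule.restrictScalars_mem]
  have hβ : ∀ n a a' b b', a - a' ∈ I.map (algebraMap R B) ^ n →
      b - b' ∈ I.map (algebraMap R B) ^ n → β a b - β a' b' ∈ I.map (algebraMap R B) ^ n := by
    intro n a a' b b' ha hb
    rw [hJ] at *
    exact sub_mem_of_bilinear (I ^ n) β ha hb
  choose xs hxs using AdicCompletion.mk_surjective (I.map (algebraMap R B)) B
  refine ⟨fun x y => AdicCompletion.mk _ _ (AdicCompletion.AdicCauchySequence.mk _ _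
    (fun n => β (xs x n) (xs y n)) (fun n => ?_)), fun n x y a b hx hy => ?_⟩
  · have h : ∀ x, xs x n - xs x (n + 1) ∈ I.map (algebraMap R B) ^ n := fun x => by
      have := SModEq.sub_mem.1 ((xs x).2 (Nat.le_succ n))
      simpa using this
    rw [SModEq.sub_mem]
    simpa using hβ n _ _ _ _ (h x) (h y)
  · rw [← hxs x, AdicCompletion.evalₐ_mk, Ideal.Quotient.eq] at hx
    rw [← hxs y, AdicCompletion.evalₐ_mk, Ideal.Quotient.eq] at hy
    rw [AdicCompletion.evalₐ_mk, Ideal.Quotient.eq]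
    exact hβ n _ _ _ _ hx hy

/-- The kernel of the projection of the completion to `B ⧸ (I B) ^ n` is `I ^ n` times the
completion, with `I` an ideal of the base ring `R`. -/
theorem ker_evalₐ {R B : Type*} [CommRing R] [CommRing B] [Algebra R B]
    (I : Ideal R) (hI : I.FG) (n : ℕ) (x : AdicCompletion (I.map (algebraMap R B)) B) :
    AdicCompletion.evalₐ _ n x = 0 ↔
      x ∈ (I ^ n • ⊤ : Submodule R (AdicCompletion (I.map (algebraMap R B)) B)) := by
  have h1 := AdicCompletion.pow_smul_top_eq_ker_eval (M := B) (n := n)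
    (hI.map (algebraMap R B))
  have h2 : x ∈ (I ^ n • ⊤ : Submodule R (AdicCompletion (I.map (algebraMap R B)) B)) ↔
      x ∈ (I.map (algebraMap R B) ^ n • ⊤ :
        Submodule B (AdicCompletion (I.map (algebraMap R B)) B)) := by
    rw [← Ideal.map_pow, ← Submodule.restrictScalars_mem R (Ideal.map _ _ • ⊤),
      Submodule.restrictScalars_map_smul_eq, Submodule.restrictScalars_top]
  rw [h2, h1, LinearMap.mem_ker]
  have h : (I.map (algebraMap R B) ^ n • ⊤ : Ideal B) ≤ I.map (algebraMap R B) ^ n := by simp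
  have h' : I.map (algebraMap R B) ^ n ≤ (I.map (algebraMap R B) ^ n • ⊤ : Ideal B) := by simp
  constructor
  · intro hx
    rw [← AdicCompletion.factor_evalₐ_eq_eval _ x h', hx, map_zero]
  · intro hx
    rw [← AdicCompletion.factor_eval_eq_evalₐ _ x h, hx, map_zero]

theorem exists_rep {R B : Type*} [CommRing R] [CommRing B] [Algebra R B] (I : Ideal R)
    (hI : I.FG) (n : ℕ) (x : AdicCompletion (I.map (algebraMap R B)) B) :
    ∃ b, x - algebraMap B _ b ∈
      (I ^ n • ⊤ : Submodule R (AdicCompletion (I.map (algebraMap R B)) B)) := by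
  obtain ⟨b, hb⟩ := Ideal.Quotient.mk_surjective (AdicCompletion.evalₐ _ n x)
  refine ⟨b, (ker_evalₐ I hI n _).1 ?_⟩
  rw [map_sub, ← hb, sub_eq_zero]
  simp

instance isAdicComplete_completion {R B : Type*} [CommRing R] [CommRing B] [Algebra R B]
    [IsNoetherianRing R] (I : Ideal R) :
    IsAdicComplete I (AdicCompletion (I.map (algebraMap R B)) B) :=
  (IsAdicComplete.map_algebraMap_iff _ _).1
    (AdicCompletion.isAdicComplete (Ideal.FG.map (IsNoetherian.noetherian I) _))

theorem flat_completion {R B : Type*} [CommRing R] [CommRing B] [Algebra R B]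
    [IsNoetherianRing R] [Module.Flat R B] (I : Ideal R) :
    Module.Flat R (AdicCompletion (I.map (algebraMap R B)) B) := by
  have hI : I.FG := IsNoetherian.noetherian I
  refine flat_of_dense I (IsScalarTower.toAlgHom R B
    (AdicCompletion (I.map (algebraMap R B)) B)).toLinearMap (exists_rep I hI) (fun n b hb => ?_)
  have := (ker_evalₐ I hI n _).2 hb
  rw [Ideal.smul_top_eq_map, Submodule.restrictScalars_mem, Ideal.map_pow]
  simpa [Ideal.Quotient.eq_zero_iff_mem] using this

theorem algHom_ext_of_dense {R B P T : Type*} [CommRing R] [CommRing P] [Algebra R P]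
    [CommRing T] [Algebra R T] (I : Ideal R) [IsHausdorff I T] (ι : B → P)
    (dense : ∀ n x, ∃ b, x - ι b ∈ (I ^ n • ⊤ : Submodule R P)) (g₁ g₂ : P →ₐ[R] T)
    (h : ∀ b, g₁ (ι b) = g₂ (ι b)) : g₁ = g₂ := by
  ext x
  rw [← sub_eq_zero]
  refine IsHausdorff.haus (I := I) inferInstance _ fun n => ?_
  rw [SModEq.zero]
  obtain ⟨b, hb⟩ := dense n x
  have := Submodule.smul_top_le_comap_smul_top (I ^ n) (g₁.toLinearMap - g₂.toLinearMap) hb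
  simpa [h] using this

/-- An `R`-algebra homomorphism from `B` to an `I`-adically complete `R`-algebra factors through the
completion of `B`. -/
theorem exists_completion_lift {R B T : Type*} [CommRing R] [CommRing B] [Algebra R B]
    [CommRing T] [Algebra R T] (I : Ideal R) [IsAdicComplete I T] (g : B →ₐ[R] T) :
    ∃ g' : AdicCompletion (I.map (algebraMap R B)) B →ₐ[R] T, ∀ b, g' (algebraMap B _ b) = g b := by
  let J := I.map (algebraMap R B)
  let J' := I.map (algebraMap R T)
  have : IsAdicComplete J' T := (IsAdicComplete.map_algebraMap_iff _ _).2 inferInstance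
  have hle : ∀ n, J ^ n ≤ (J' ^ n).comap g := fun n => by
    rw [← Ideal.map_le_iff_le_comap, Ideal.map_pow]
    refine Ideal.pow_right_mono (le_of_eq ?_) n
    have := Ideal.map_map (I := I) (algebraMap R B) (g : B →+* T)
    rwa [AlgHom.comp_algebraMap] at this
  let F : ∀ n, AdicCompletion J B →ₐ[R] T ⧸ J' ^ n := fun n =>
    (Ideal.quotientMapₐ (J' ^ n) g (hle n)).comp ((AdicCompletion.evalₐ J n).restrictScalars R)
  have hF : ∀ n x b, AdicCompletion.evalₐ J n x = Ideal.Quotient.mk _ b →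
      F n x = Ideal.Quotient.mk _ (g b) := fun n x b h => by
    simp [F, h]
  have hcomp : ∀ {m n : ℕ} (hmn : m ≤ n),
      (Ideal.Quotient.factorₐ R (Ideal.pow_le_pow_right hmn)).comp (F n) = F m := by
    intro m n hmn
    ext x
    obtain ⟨xs, rfl⟩ := AdicCompletion.mk_surjective J B x
    rw [AlgHom.comp_apply, hF n _ _ (AdicCompletion.evalₐ_mk J n xs),
      hF m _ _ (AdicCompletion.evalₐ_mk J m xs)]
    have h1 : xs n - xs m ∈ J ^ m := by
      have := SModEq.sub_mem.1 (xs.2 hmn).symm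
      simpa using this
    have h2 := hle m h1
    rw [Ideal.mem_comap, map_sub] at h2
    exact Ideal.Quotient.eq.2 h2
  refine ⟨IsAdicComplete.liftAlgHom J' F hcomp, fun b => ?_⟩
  · rw [← sub_eq_zero]
    refine IsHausdorff.haus (I := J') inferInstance _ fun n => ?_
    rw [SModEq.zero]
    have h1 := IsAdicComplete.mk_liftAlgHom J' F hcomp n
      (algebraMap B _ b)
    rw [hF n _ b (by simp), Ideal.Quotient.eq] at h1
    simpa using h1

/-! ### Poisson deformations -/

/-- The bracket of a Poisson deformation as an `R`-bilinear map. -/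
def PoissonDeformation.bracketₗ {K R C : Type} [Field K] [CommRing R] [Algebra K R]
    [IsLocalRing R] [CommRing C] [Algebra K C] (D : PoissonDeformation K R C) :
    D.carrier →ₗ[R] D.carrier →ₗ[R] D.carrier :=
  LinearMap.mk₂ R D.bracket D.bracket_add_left D.bracket_smul_left D.bracket_add_right
    (fun r a b => D.bracket_smul_right r a b)

/-- The augmentation of `A` extends to `A[t⁻¹] → C[s⁻¹]`, where `t` lifts `s`; the extension is
surjective with kernel `𝔪 A[t⁻¹]`. -/
theorem exists_localized_augmentation {K R C : Type} [Field K] [CommRing R] [Algebra K R]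
    [IsLocalRing R] [CommRing C] [Algebra K C] (D : PoissonDeformation K R C) (s : C)
    (C' : Type) [CommRing C'] [Algebra K C'] [Algebra C C'] [IsScalarTower K C C']
    [IsLocalization.Away s C'] (t : D.carrier) (ht : D.aug t = s) :
    ∃ q : Localization.Away t →ₐ[K] C', Function.Surjective q ∧
      (∀ a, q (algebraMap D.carrier _ a) = algebraMap C C' (D.aug a)) ∧
      ∀ x, q x = 0 ↔ x ∈ (IsLocalRing.maximalIdeal R).map
        (algebraMap R (Localization.Away t)) := by
  have hu : IsUnit (((algebraMap C C').comp (D.aug : D.carrier →+* C)) t) := by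
    simpa [ht] using IsLocalization.Away.algebraMap_isUnit (S := C') s
  let q₀ : Localization.Away t →+* C' := IsLocalization.Away.lift t hu
  have hq₀ : ∀ a, q₀ (algebraMap D.carrier _ a) = algebraMap C C' (D.aug a) := fun a => by
    simp [q₀]
  have hut : ∀ k, IsUnit (algebraMap D.carrier (Localization.Away t) (t ^ k)) := fun k => by
    rw [map_pow]; exact (IsLocalization.Away.algebraMap_isUnit t).pow k
  have hker : ∀ a, D.aug a = 0 ↔ a ∈ (IsLocalRing.maximalIdeal R).map
      (algebraMap R D.carrier) := fun a => by
    rw [D.ker, Ideal.smul_top_eq_map, Submodule.restrictScalars_mem]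
  refine ⟨{ q₀ with
      commutes' := fun k => ?_ }, fun c => ?_, hq₀, fun x => ⟨fun hx => ?_, fun hx => ?_⟩⟩
  · change q₀ (algebraMap K (Localization.Away t) k) = _
    rw [IsScalarTower.algebraMap_apply K D.carrier (Localization.Away t), hq₀, AlgHom.commutes,
      ← IsScalarTower.algebraMap_apply]
  · obtain ⟨n, c₀, hc⟩ := IsLocalization.Away.surj s c
    obtain ⟨a, rfl⟩ := D.surj c₀
    refine ⟨IsLocalization.mk' (Localization.Away t) a (⟨t ^ n, n, rfl⟩ : Submonoid.powers t), ?_⟩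
    change q₀ _ = c
    have h1 := IsLocalization.mk'_spec (Localization.Away t) a
      (⟨t ^ n, n, rfl⟩ : Submonoid.powers t)
    have h2 := congrArg q₀ h1
    rw [map_mul, hq₀, hq₀, map_pow, ht, ← hc, map_pow] at h2
    exact ((IsLocalization.Away.algebraMap_isUnit (S := C') s).pow n).mul_left_inj.1 h2
  · change q₀ x = 0 at hx
    obtain ⟨n, a, ha⟩ := IsLocalization.Away.surj t x
    have h1 := congrArg q₀ ha
    rw [map_mul, hx, zero_mul, hq₀, ← map_zero (algebraMap C C')] at h1
    obtain ⟨⟨_, k, rfl⟩, h2⟩ := (IsLocalization.eq_iff_exists (Submonoid.powers s) C').1 h1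
    have h3 : D.aug (t ^ k * a) = 0 := by
      rw [map_mul, map_pow, ht, h2.symm, mul_zero]
    rw [hker] at h3
    have h4 := Ideal.mem_map_of_mem (algebraMap D.carrier (Localization.Away t)) h3
    rw [Ideal.map_map, ← IsScalarTower.algebraMap_eq, map_mul, ← ha] at h4
    rw [Ideal.unit_mul_mem_iff_mem _ (hut k), ← map_pow, Ideal.mul_unit_mem_iff_mem _ (hut n)] at h4
    exact h4
  · change x ∈ RingHom.ker q₀
    revert x
    change _ ≤ RingHom.ker q₀
    rw [Ideal.map_le_iff_le_comap]
    intro r hr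
    rw [Ideal.mem_comap, RingHom.mem_ker,
      IsScalarTower.algebraMap_apply R D.carrier (Localization.Away t), hq₀,
      (hker _).2 (Ideal.mem_map_of_mem _ hr), map_zero]

/-- Units lift along the augmentation, because by completeness its kernel `𝔪 A` lies in the Jacobson
radical of `A`. -/
theorem PoissonDeformation.isUnit_of_aug {K R C : Type} [Field K] [CommRing R] [Algebra K R]
    [IsLocalRing R] [CommRing C] [Algebra K C] (D : PoissonDeformation K R C) (a : D.carrier)
    (ha : IsUnit (D.aug a)) : IsUnit a := by
  have := D.complete
  have hc : IsAdicComplete ((IsLocalRing.maximalIdeal R).map (algebraMap R D.carrier)) D.carrier :=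
    (IsAdicComplete.map_algebraMap_iff _ _).2 inferInstance
  obtain ⟨c, hc'⟩ := ha.exists_right_inv
  obtain ⟨b, rfl⟩ := D.surj c
  have h1 : D.aug (a * b - 1) = 0 := by simp [hc']
  rw [D.ker, Ideal.smul_top_eq_map, Submodule.restrictScalars_mem] at h1
  have h2 := IsAdicComplete.le_jacobson_bot _ h1
  have h3 := Ideal.mem_jacobson_bot.1 h2 1
  rw [mul_one, sub_add_cancel] at h3
  exact isUnit_of_mul_isUnit_left h3

/-- A homomorphism of `R`-algebras preserves the brackets if it does so on an `𝔪`-adically dense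
subset of its source. -/
theorem PoissonDeformation.map_bracket_of_dense {K R C₁ C₂ B : Type} [Field K] [CommRing R]
    [Algebra K R] [IsLocalRing R] [CommRing C₁] [Algebra K C₁] [CommRing C₂] [Algebra K C₂]
    {D₁ : PoissonDeformation K R C₁} {D₂ : PoissonDeformation K R C₂}
    (g : D₁.carrier →ₐ[R] D₂.carrier) (ι : B → D₁.carrier)
    (dense : ∀ n x, ∃ b, x - ι b ∈
      (IsLocalRing.maximalIdeal R ^ n • ⊤ : Submodule R D₁.carrier))
    (h : ∀ a b, g (D₁.bracket (ι a) (ι b)) = D₂.bracket (g (ι a)) (g (ι b)))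
    (x y : D₁.carrier) : g (D₁.bracket x y) = D₂.bracket (g x) (g y) := by
  have := D₂.complete
  rw [← sub_eq_zero]
  refine IsHausdorff.haus (I := IsLocalRing.maximalIdeal R) inferInstance _ fun n => ?_
  rw [SModEq.zero]
  obtain ⟨a, ha⟩ := dense n x
  obtain ⟨b, hb⟩ := dense n y
  have hmap : ∀ {z c}, z - c ∈
      (IsLocalRing.maximalIdeal R ^ n • ⊤ : Submodule R D₁.carrier) →
      g z - g c ∈ (IsLocalRing.maximalIdeal R ^ n • ⊤ : Submodule R D₂.carrier) :=
    fun {z c} hz => by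
      rw [← map_sub]
      exact Submodule.smul_top_le_comap_smul_top _ g.toLinearMap hz
  have h1 := hmap (sub_mem_of_bilinear _ D₁.bracketₗ ha hb)
  have h2 := sub_mem_of_bilinear _ D₂.bracketₗ (hmap ha) (hmap hb)
  have h3 : g (D₁.bracket x y) - D₂.bracket (g x) (g y) =
      (g (D₁.bracket x y) - g (D₁.bracket (ι a) (ι b))) -
        (D₂.bracket (g x) (g y) - D₂.bracket (g (ι a)) (g (ι b))) := by
    rw [h]
    ring
  rw [h3]
  exact Submodule.sub_mem _ h1 h2

/-- A bracket-preserving homomorphism that inverts `t` extends to `A[t⁻¹]` compatibly with the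
extended bracket `E`. -/
theorem PoissonDeformation.exists_localized_lift {K R C C₂ : Type} [Field K] [CommRing R]
    [Algebra K R] [IsLocalRing R] [CommRing C] [Algebra K C] [CommRing C₂] [Algebra K C₂]
    (D₂ : PoissonDeformation K R C₂) (D : PoissonDeformation K R C) (t : D.carrier)
    (h : D.carrier →ₐ[R] D₂.carrier)
    (hh : ∀ a b, h (D.bracket a b) = D₂.bracket (h a) (h b)) (hunit : IsUnit (h t))
    (E : Derivation R (Localization.Away t)
      (Derivation R (Localization.Away t) (Localization.Away t)))
    (hE : ∀ a b : D.carrier, E (algebraMap D.carrier _ a) (algebraMap D.carrier _ b) =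
      algebraMap D.carrier _ (D.bracket a b)) :
    ∃ g : Localization.Away t →ₐ[R] D₂.carrier,
      (∀ a, g (algebraMap D.carrier _ a) = h a) ∧
      ∀ x y, g (E x y) = D₂.bracket (g x) (g y) := by
  let g : Localization.Away t →ₐ[R] D₂.carrier :=
    IsLocalization.liftAlgHom (M := Submonoid.powers t) (f := h) (by
      rintro ⟨_, k, rfl⟩
      rw [map_pow]
      exact hunit.pow k)
  have hg : ∀ a, g (algebraMap D.carrier _ a) = h a := fun a => by simp [g]
  refine ⟨g, hg, fun x y => ?_⟩
  rw [← sub_eq_zero]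
  refine eq_zero_of_bileibniz (Submonoid.powers t) (g : Localization.Away t →+* D₂.carrier)
    (fun x y => g (E x y) - D₂.bracket (g x) (g y)) (fun x y z => ?_) (fun x y z => ?_)
    (fun a b => by rw [hE, hg, hg, hg, hh, sub_self]) x y
  · simp only [Derivation.leibniz, Derivation.add_apply, Derivation.smul_apply, smul_eq_mul,
      map_add, map_mul, D₂.bracket_leibniz_left, RingHom.coe_coe]
    ring
  · simp only [Derivation.leibniz, smul_eq_mul,
      map_add, map_mul, D₂.bracket_leibniz_right, RingHom.coe_coe]
    ring

/-- The `𝔪`-adic completion of `A[t⁻¹]` is a Poisson deformation `D'` of `C[s⁻¹]`. Its relation to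
`A[t⁻¹]` is recorded by the map `ι`: brackets and augmentation are compatible, the image is dense,
and homomorphisms from `A[t⁻¹]` to `𝔪`-adically complete algebras factor through `ι`. -/
theorem PoissonDeformation.exists_completed_localization {K R C : Type} [Field K] [CommRing R]
    [Algebra K R] [IsNoetherianRing R] [IsLocalRing R] [CommRing C] [Algebra K C]
    (D : PoissonDeformation K R C) (s : C) (C' : Type) [CommRing C'] [Algebra K C']
    [Algebra C C'] [IsScalarTower K C C'] [IsLocalization.Away s C'] (t : D.carrier)
    (ht : D.aug t = s) :
    ∃ (E : Derivation R (Localization.Away t)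
        (Derivation R (Localization.Away t) (Localization.Away t)))
      (D' : PoissonDeformation K R C') (ι : Localization.Away t →ₐ[R] D'.carrier),
      (∀ a b : D.carrier, E (algebraMap D.carrier _ a) (algebraMap D.carrier _ b) =
        algebraMap D.carrier _ (D.bracket a b)) ∧
      (∀ x y, D'.bracket (ι x) (ι y) = ι (E x y)) ∧
      (∀ a : D.carrier, D'.aug (ι (algebraMap D.carrier _ a)) = algebraMap C C' (D.aug a)) ∧
      (∀ n x, ∃ b, x - ι b ∈
        (IsLocalRing.maximalIdeal R ^ n • ⊤ : Submodule R D'.carrier)) ∧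
      ∀ (T : Type) [CommRing T] [Algebra R T] [IsAdicComplete (IsLocalRing.maximalIdeal R) T]
        (g : Localization.Away t →ₐ[R] T), ∃ g' : D'.carrier →ₐ[R] T, ∀ b, g' (ι b) = g b := by
  let S := Submonoid.powers t
  let B := Localization.Away t
  have hm : (IsLocalRing.maximalIdeal R).FG := IsNoetherian.noetherian _
  have hflatA := D.flat
  have hflatB : Module.Flat R B := Module.Flat.trans R D.carrier B
  obtain ⟨q, hqs, hqa, hqk⟩ := exists_localized_augmentation D s C' t ht
  obtain ⟨E, hE⟩ := exists_localized_bracket (R := R) (B := B) S D.bracket D.bracket_add_left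
    D.bracket_add_right D.bracket_smul_left D.bracket_smul_right D.bracket_leibniz_left
    D.bracket_leibniz_right
  have hEanti := localized_antisymm S E (fun a b => by
    rw [hE, hE, ← map_neg, ← D.bracket_antisymm])
  have hEjac := localized_jacobi S E hEanti (fun a b c => by
    rw [hE, hE, hE, hE, hE, hE, ← map_add, ← map_add, D.bracket_jacobi, map_zero])
  have hEq : ∀ x y, q (E x y) = 0 := eq_zero_of_bileibniz S (q : B →+* C')
    (fun x y => q (E x y)) (fun x y z => by simp [mul_comm, add_comm])
    (fun x y z => by simp [mul_comm, add_comm])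
    (fun a b => by
      rw [hE]
      exact (hqa _).trans (by rw [D.aug_bracket, map_zero]))
  let β : B →ₗ[R] B →ₗ[R] B := LinearMap.mk₂ R (fun x y => E x y) (by simp) (by simp) (by simp)
    (by simp)
  have hβ : ∀ x y, β x y = E x y := fun _ _ => rfl
  obtain ⟨γ, hγ⟩ := exists_completed_bracket (IsLocalRing.maximalIdeal R) β
  let J := (IsLocalRing.maximalIdeal R).map (algebraMap R B)
  have rep : ∀ n x, ∃ b, AdicCompletion.evalₐ J n x = Ideal.Quotient.mk _ b := fun n x =>
    (Ideal.Quotient.mk_surjective (AdicCompletion.evalₐ J n x)).imp fun _ h => h.symm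
  have ev_add : ∀ {n x y a b}, AdicCompletion.evalₐ J n x = Ideal.Quotient.mk _ a →
      AdicCompletion.evalₐ J n y = Ideal.Quotient.mk _ b →
      AdicCompletion.evalₐ J n (x + y) = Ideal.Quotient.mk _ (a + b) := fun h h' => by
    rw [map_add, map_add, h, h']
  have ev_mul : ∀ {n x y a b}, AdicCompletion.evalₐ J n x = Ideal.Quotient.mk _ a →
      AdicCompletion.evalₐ J n y = Ideal.Quotient.mk _ b →
      AdicCompletion.evalₐ J n (x * y) = Ideal.Quotient.mk _ (a * b) := fun h h' => by
    rw [map_mul, map_mul, h, h']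
  have ev_neg : ∀ {n x a}, AdicCompletion.evalₐ J n x = Ideal.Quotient.mk _ a →
      AdicCompletion.evalₐ J n (-x) = Ideal.Quotient.mk _ (-a) := fun h => by
    rw [map_neg, map_neg, h]
  have ev_smul : ∀ {n x a} (r : R), AdicCompletion.evalₐ J n x = Ideal.Quotient.mk _ a →
      AdicCompletion.evalₐ J n (r • x) = Ideal.Quotient.mk _ (r • a) := fun {n x a} r h => by
    rw [← algebraMap_smul B r x, map_smul, h, ← algebraMap_smul B r a]
    rfl
  have ev_of : ∀ n b, AdicCompletion.evalₐ J n (algebraMap B _ b) = Ideal.Quotient.mk _ b :=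
    fun n b => by simp
  -- The Poisson identities on the completion are checked on representatives in `B` at every level `n`.
  have ev_ext : ∀ {x y}, (∀ n, ∃ a b, AdicCompletion.evalₐ J n x = Ideal.Quotient.mk _ a ∧
      AdicCompletion.evalₐ J n y = Ideal.Quotient.mk _ b ∧ a = b) → x = y := fun h =>
    AdicCompletion.ext_evalₐ fun n => by
      obtain ⟨a, b, h1, h2, rfl⟩ := h n
      rw [h1, h2]
  have hq1 : ∀ b ∈ J ^ 1, q b = 0 := fun b hb => (hqk b).2 (by simpa using hb)
  let aug : AdicCompletion J B →ₐ[K] C' :=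
    (Ideal.Quotient.liftₐ (J ^ 1) q hq1).comp ((AdicCompletion.evalₐ J 1).restrictScalars K)
  have haug : ∀ {x b}, AdicCompletion.evalₐ J 1 x = Ideal.Quotient.mk _ b → aug x = q b :=
    fun {x b} h => by
      change Ideal.Quotient.lift (J ^ 1) (q : B →+* C') hq1 (AdicCompletion.evalₐ J 1 x) = q b
      rw [h]
      exact Ideal.Quotient.lift_mk _ _ _
  let D' : PoissonDeformation K R C' :=
    { carrier := AdicCompletion J B
      tower := IsScalarTower.of_algebraMap_eq fun k => by
        rw [AdicCompletion.algebraMap_apply, AdicCompletion.algebraMap_apply,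
          IsScalarTower.algebraMap_apply K R B]
      flat := flat_completion _
      complete := isAdicComplete_completion _
      bracket := γ
      bracket_add_left := fun x y z => ev_ext fun n => by
        obtain ⟨a, ha⟩ := rep n x
        obtain ⟨b, hb⟩ := rep n y
        obtain ⟨c, hc⟩ := rep n z
        exact ⟨_, _, hγ n _ _ _ _ (ev_add ha hb) hc,
          ev_add (hγ n _ _ _ _ ha hc) (hγ n _ _ _ _ hb hc), by simp⟩
      bracket_add_right := fun x y z => ev_ext fun n => by
        obtain ⟨a, ha⟩ := rep n x
        obtain ⟨b, hb⟩ := rep n y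
        obtain ⟨c, hc⟩ := rep n z
        exact ⟨_, _, hγ n _ _ _ _ ha (ev_add hb hc),
          ev_add (hγ n _ _ _ _ ha hb) (hγ n _ _ _ _ ha hc), by simp⟩
      bracket_smul_left := fun r x y => ev_ext fun n => by
        obtain ⟨a, ha⟩ := rep n x
        obtain ⟨b, hb⟩ := rep n y
        exact ⟨_, _, hγ n _ _ _ _ (ev_smul r ha) hb, ev_smul r (hγ n _ _ _ _ ha hb), by simp⟩
      bracket_smul_right := fun r x y => ev_ext fun n => by
        obtain ⟨a, ha⟩ := rep n x
        obtain ⟨b, hb⟩ := rep n y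
        exact ⟨_, _, hγ n _ _ _ _ ha (ev_smul r hb), ev_smul r (hγ n _ _ _ _ ha hb), by simp⟩
      bracket_antisymm := fun x y => ev_ext fun n => by
        obtain ⟨a, ha⟩ := rep n x
        obtain ⟨b, hb⟩ := rep n y
        exact ⟨_, _, hγ n _ _ _ _ ha hb, ev_neg (hγ n _ _ _ _ hb ha), hEanti a b⟩
      bracket_jacobi := fun x y z => ev_ext fun n => by
        obtain ⟨a, ha⟩ := rep n x
        obtain ⟨b, hb⟩ := rep n y
        obtain ⟨c, hc⟩ := rep n z
        exact ⟨_, 0, ev_add (ev_add (hγ n _ _ _ _ ha (hγ n _ _ _ _ hb hc))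
          (hγ n _ _ _ _ hb (hγ n _ _ _ _ hc ha))) (hγ n _ _ _ _ hc (hγ n _ _ _ _ ha hb)),
          by rw [map_zero, map_zero], hEjac a b c⟩
      bracket_leibniz_left := fun x y z => ev_ext fun n => by
        obtain ⟨a, ha⟩ := rep n x
        obtain ⟨b, hb⟩ := rep n y
        obtain ⟨c, hc⟩ := rep n z
        exact ⟨_, _, hγ n _ _ _ _ (ev_mul ha hb) hc, ev_add (ev_mul (hγ n _ _ _ _ ha hc) hb)
          (ev_mul ha (hγ n _ _ _ _ hb hc)), by simp [hβ, mul_comm, add_comm]⟩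
      bracket_leibniz_right := fun x y z => ev_ext fun n => by
        obtain ⟨a, ha⟩ := rep n x
        obtain ⟨b, hb⟩ := rep n y
        obtain ⟨c, hc⟩ := rep n z
        exact ⟨_, _, hγ n _ _ _ _ ha (ev_mul hb hc), ev_add (ev_mul (hγ n _ _ _ _ ha hb) hc)
          (ev_mul hb (hγ n _ _ _ _ ha hc)), by simp [hβ, mul_comm, add_comm]⟩
      aug := aug
      surj := fun c => by
        obtain ⟨b, rfl⟩ := hqs c
        exact ⟨algebraMap B _ b, haug (ev_of 1 b)⟩
      ker := fun x => by
        obtain ⟨b, hb⟩ := rep 1 x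
        have h1 := ker_evalₐ (B := B) _ hm 1 x
        rw [pow_one (IsLocalRing.maximalIdeal R)] at h1
        rw [haug hb, ← h1, hqk]
        change _ ↔ AdicCompletion.evalₐ J 1 x = 0
        rw [hb, Ideal.Quotient.eq_zero_iff_mem, pow_one]
      aug_bracket := fun x y => by
        obtain ⟨a, ha⟩ := rep 1 x
        obtain ⟨b, hb⟩ := rep 1 y
        rw [haug (hγ 1 _ _ _ _ ha hb)]
        exact hEq a b }
  let ι : B →ₐ[R] D'.carrier := IsScalarTower.toAlgHom R B (AdicCompletion J B)
  have hι : ∀ x y, D'.bracket (ι x) (ι y) = ι (E x y) := fun x y => ev_ext fun n =>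
    ⟨_, _, hγ n _ _ _ _ (ev_of n x) (ev_of n y), ev_of n _, rfl⟩
  exact ⟨E, D', ι, hE, hι, fun a => (haug (ev_of 1 _)).trans (hqa a), exists_rep (B := B) _ hm,
    fun T _ _ _ g => exists_completion_lift (IsLocalRing.maximalIdeal R) g⟩

/-- Let `(R, 𝔪)` be a parameter `K`-algebra, `C` a commutative `K`-algebra,
`(A, {-,-}, π)` a Poisson `R`-deformation of `C`, `s ∈ C` and `C' := C[s⁻¹]`.  Then there exist a
Poisson `R`-deformation `(A', {-,-}', π')` of `C'` and a bracket-preserving `R`-algebra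
homomorphism `g : A → A'` lifting `τ : C → C'`, which is universal: every bracket-preserving
`R`-algebra homomorphism `h : A → A''` to a Poisson `R`-deformation of some `C''` lifting
`τ' ∘ τ` factors uniquely through `g` by a bracket-preserving `R`-algebra homomorphism. -/
theorem statement9
    (K : Type) [Field K]
    (R : Type) [CommRing R] [Algebra K R] [IsNoetherianRing R] [IsLocalRing R]
    (hRcomp : IsAdicComplete (IsLocalRing.maximalIdeal R) R)
    (hres : Function.Bijective (algebraMap K (R ⧸ IsLocalRing.maximalIdeal R)))
    (C : Type) [CommRing C] [Algebra K C]
    (D : PoissonDeformation K R C)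
    (s : C)
    (C' : Type) [CommRing C'] [Algebra K C'] [Algebra C C'] [IsScalarTower K C C']
    [IsLocalization.Away s C'] :
    ∃ (D' : PoissonDeformation K R C') (g : D.carrier →ₐ[R] D'.carrier),
      (∀ a b : D.carrier, g (D.bracket a b) = D'.bracket (g a) (g b)) ∧
      (∀ a : D.carrier, D'.aug (g a) = algebraMap C C' (D.aug a)) ∧
      ∀ (C'' : Type) [CommRing C''] [Algebra K C''] (τ' : C' →+* C'')
        (D'' : PoissonDeformation K R C'') (h : D.carrier →ₐ[R] D''.carrier),
        (∀ a b : D.carrier, h (D.bracket a b) = D''.bracket (h a) (h b)) →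
        (∀ a : D.carrier, D''.aug (h a) = τ' (algebraMap C C' (D.aug a))) →
        ∃! g' : D'.carrier →ₐ[R] D''.carrier,
          (∀ a b : D'.carrier, g' (D'.bracket a b) = D''.bracket (g' a) (g' b)) ∧
          g'.comp g = h := by
  obtain ⟨t, ht⟩ := D.surj s
  obtain ⟨E, D', ι, hE, hι, haug, dense, lift⟩ := D.exists_completed_localization s C' t ht
  refine ⟨D', ι.comp (IsScalarTower.toAlgHom R D.carrier (Localization.Away t)), fun a b => ?_,
    haug, ?_⟩
  · change ι (algebraMap D.carrier (Localization.Away t) _) =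
      D'.bracket (ι (algebraMap D.carrier _ a)) (ι (algebraMap D.carrier _ b))
    rw [hι, hE]
  · intro C'' _ _ τ' D'' h hh haugh
    have hcomplete := D''.complete
    have hunit : IsUnit (h t) := D''.isUnit_of_aug _ <| by
      rw [haugh, ht]
      exact (IsLocalization.Away.algebraMap_isUnit (S := C') s).map τ'
    obtain ⟨g₀, hg₀, hg₀E⟩ := D''.exists_localized_lift D t h hh hunit E hE
    obtain ⟨g', hg'⟩ := lift D''.carrier g₀
    refine ⟨g', ⟨PoissonDeformation.map_bracket_of_dense g' ι dense fun a b => ?_,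
      AlgHom.ext fun a => (hg' _).trans (hg₀ a)⟩, fun g₂ hg₂ => ?_⟩
    · rw [hι, hg', hg', hg', hg₀E]
    · refine algHom_ext_of_dense (IsLocalRing.maximalIdeal R) ι dense g₂ g' fun b => ?_
      rw [hg']
      have h1 : ((g₂.comp ι : Localization.Away t →ₐ[R] D''.carrier) :
          Localization.Away t →+* D''.carrier) = g₀ := by
        refine IsLocalization.ringHom_ext (Submonoid.powers t) (RingHom.ext fun a => ?_)
        exact (DFunLike.congr_fun hg₂.2 a).trans (hg₀ a).symm
      exact DFunLike.congr_fun h1 b
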